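/- Let T > 0 and β be a real constant with 0 < β < 1/(2T). Then the boundary value problem ((u'/√(1+u'²)))' = β cos(u), u(0) = u(T) = u'(T), has at least one solution u ∈ C¹([0,T]) with u'/√(1+u'²) continuously differentiable. -/

import Mathlib

open Set

open scoped NNReal

/-!
Put `v = u' / √(1 + u'²)`. The equation becomes the planar system `u' = g v`, `v' = f(t, u, g v)`,
where `g` inverts `y ↦ y / √(1 + y²)` on `(-1, 1)`. Truncating `g` outside `[-M, M]`, with `M < 1`,
makes the field bounded and Lipschitz, so that all solutions are global. Shoot backwards from
`u T = g d`, `v T = d`. If `|f| ≤ B`, then for `d = ± B T` the component `v` has constant sign, so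
`u` is monotone, and the intermediate value theorem yields some `d` with `u 0 = u T`. By Rolle's
theorem `v` then vanishes somewhere, hence `|v| ≤ B T < 1`: with `B T < M < 1` the truncation is
never active.
-/

section Flow

variable {E : Type*} [NormedAddCommGroup E] [NormedSpace ℝ E]

theorem exists_flow_of_lipschitzWith_of_norm_le [CompleteSpace E] {F : ℝ → E → E} {a b : ℝ}
    {K : ℝ≥0} {L : ℝ} {S : Set E} (t₀ : Icc a b) (hlip : ∀ t ∈ Icc a b, LipschitzWith K (F t))
    (hcont : ∀ x, ContinuousOn (F · x) (Icc a b)) (hbound : ∀ t ∈ Icc a b, ∀ x, ‖F t x‖ ≤ L)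
    (hS : Bornology.IsBounded S) :
    ∃ Φ : E → ℝ → E, (∀ x ∈ S, Φ x t₀ = x ∧ IsIntegralCurveOn (Φ x) F (Icc a b)) ∧
      ∀ t ∈ Icc a b, ContinuousOn (Φ · t) S := by
  obtain ⟨r, hr⟩ := hS.subset_closedBall 0
  have hSr : S ⊆ Metric.closedBall 0 r.toNNReal :=
    hr.trans (Metric.closedBall_subset_closedBall r.le_coe_toNNReal)
  let ℓ : ℝ≥0 := (max (b - t₀) (t₀ - a)).toNNReal
  have hF : IsPicardLindelof F t₀ 0 (r.toNNReal + L.toNNReal * ℓ) r.toNNReal L.toNNReal K :=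
    { lipschitzOnWith := fun t ht => (hlip t ht).lipschitzOnWith
      continuousOn := fun x _ => hcont x
      norm_le := fun t ht x _ => (hbound t ht x).trans L.le_coe_toNNReal
      mul_max_le := by
        push_cast
        rw [add_sub_cancel_left]
        exact mul_le_mul_of_nonneg_left (Real.le_coe_toNNReal _) L.toNNReal.2 }
  obtain ⟨Φ, hΦ, L', hL'⟩ :=
    hF.exists_forall_mem_closedBall_eq_hasDerivWithinAt_lipschitzOnWith
  exact ⟨Φ, fun x hx => hΦ x (hSr hx), fun t ht => (hL' t ht).continuousOn.mono hSr⟩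

theorem exists_hasDerivAt_eqOn_Icc [CompleteSpace E] {x w : ℝ → E} {a b : ℝ} (hw : Continuous w)
    (hx : ∀ t ∈ Icc a b, HasDerivWithinAt x (w t) (Icc a b) t) :
    ∃ X : ℝ → E, (∀ t, HasDerivAt X (w t) t) ∧ EqOn X x (Icc a b) := by
  let X : ℝ → E := fun t => x a + ∫ s in a..t, w s
  have hX (t : ℝ) : HasDerivAt X (w t) t :=
    (hw.integral_hasStrictDerivAt a t).hasDerivAt.const_add _
  refine ⟨X, hX, eq_of_has_deriv_right_eq (f' := w) (fun t _ => (hX t).hasDerivWithinAt)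
    (fun t ht => ?_) (HasDerivAt.continuousOn fun t _ => hX t)
    (HasDerivWithinAt.continuousOn hx) (by simp [X])⟩
  exact (hx t (Ico_subset_Icc_self ht)).mono_of_mem_nhdsWithin (Icc_mem_nhdsGE_of_mem ht)

theorem contDiff_one_of_hasDerivAt {x w : ℝ → E} (hx : ∀ t, HasDerivAt x (w t) t)
    (hw : Continuous w) : ContDiff ℝ 1 x :=
  contDiff_one_iff_deriv.2 ⟨fun t => (hx t).differentiableAt,
    (funext fun t => (hx t).deriv : deriv x = w) ▸ hw⟩

end Flow

/-- The vector field of the planar system `x' = g y`, `y' = h(t, x, y)`. -/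
def planarField (g : ℝ → ℝ) (h : ℝ → ℝ × ℝ → ℝ) (t : ℝ) (p : ℝ × ℝ) : ℝ × ℝ :=
  (g p.2, h t p)

namespace planarField

variable {g k : ℝ → ℝ} {h : ℝ → ℝ × ℝ → ℝ} {γ : ℝ → ℝ × ℝ} {a b B R : ℝ} {K K' : ℝ≥0}

theorem lipschitzWith {t : ℝ} (hg : LipschitzWith K g) (hh : LipschitzWith K' (h t)) :
    LipschitzWith (max K K') (planarField g h t) :=
  mul_one K ▸ (hg.comp LipschitzWith.prod_snd).prodMk hh

theorem hasDerivWithinAt_fst (hγ : IsIntegralCurveOn γ (planarField g h) (Icc a b)) {t : ℝ}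
    (ht : t ∈ Icc a b) : HasDerivWithinAt (fun s => (γ s).1) (g (γ t).2) (Icc a b) t :=
  (hasFDerivAt_fst (𝕜 := ℝ) (p := γ t)).comp_hasDerivWithinAt t (hγ t ht)

theorem hasDerivWithinAt_snd (hγ : IsIntegralCurveOn γ (planarField g h) (Icc a b)) {t : ℝ}
    (ht : t ∈ Icc a b) : HasDerivWithinAt (fun s => (γ s).2) (h t (γ t)) (Icc a b) t :=
  (hasFDerivAt_snd (𝕜 := ℝ) (p := γ t)).comp_hasDerivWithinAt t (hγ t ht)

theorem hasDerivWithinAt_fst_interior (hγ : IsIntegralCurveOn γ (planarField g h) (Icc a b)) {t : ℝ}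
    (ht : t ∈ interior (Icc a b)) :
    HasDerivWithinAt (fun s => (γ s).1) (g (γ t).2) (interior (Icc a b)) t :=
  (hasDerivWithinAt_fst hγ (interior_subset ht)).mono interior_subset

theorem continuousOn_fst (hγ : IsIntegralCurveOn γ (planarField g h) (Icc a b)) :
    ContinuousOn (fun t => (γ t).1) (Icc a b) :=
  HasDerivWithinAt.continuousOn fun _ ht => hasDerivWithinAt_fst hγ ht

theorem monotoneOn_fst (hγ : IsIntegralCurveOn γ (planarField g h) (Icc a b))
    (hg : ∀ y, 0 ≤ y → 0 ≤ g y) (hpos : ∀ t ∈ Icc a b, 0 ≤ (γ t).2) :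
    MonotoneOn (fun t => (γ t).1) (Icc a b) :=
  monotoneOn_of_hasDerivWithinAt_nonneg (convex_Icc a b) (continuousOn_fst hγ)
    (fun _ => hasDerivWithinAt_fst_interior hγ) fun t ht => hg _ (hpos t (interior_subset ht))

theorem antitoneOn_fst (hγ : IsIntegralCurveOn γ (planarField g h) (Icc a b))
    (hg : ∀ y ≤ 0, g y ≤ 0) (hneg : ∀ t ∈ Icc a b, (γ t).2 ≤ 0) :
    AntitoneOn (fun t => (γ t).1) (Icc a b) :=
  antitoneOn_of_hasDerivWithinAt_nonpos (convex_Icc a b) (continuousOn_fst hγ)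
    (fun _ => hasDerivWithinAt_fst_interior hγ) fun t ht => hg _ (hneg t (interior_subset ht))

theorem abs_snd_sub_le (hγ : IsIntegralCurveOn γ (planarField g h) (Icc a b))
    (hh : ∀ t ∈ Icc a b, ∀ p, |h t p| ≤ B) {s t : ℝ} (hs : s ∈ Icc a b) (ht : t ∈ Icc a b) :
    |(γ t).2 - (γ s).2| ≤ B * (b - a) := by
  have hB : 0 ≤ B := (abs_nonneg _).trans (hh s hs (γ s))
  calc |(γ t).2 - (γ s).2| ≤ B * |t - s| :=
        (convex_Icc a b).norm_image_sub_le_of_norm_hasDerivWithin_le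
          (fun _ => hasDerivWithinAt_snd hγ) (fun x hx => hh x hx (γ x)) hs ht
    _ ≤ B * (b - a) := by
        gcongr
        exact Real.dist_le_of_mem_Icc ht hs

theorem abs_snd_le_of_fst_eq (hγ : IsIntegralCurveOn γ (planarField g h) (Icc a b))
    (hg : ∀ y, g y = 0 → y = 0) (hh : ∀ t ∈ Icc a b, ∀ p, |h t p| ≤ B) (hab : a < b)
    (heq : (γ a).1 = (γ b).1) {t : ℝ} (ht : t ∈ Icc a b) : |(γ t).2| ≤ B * (b - a) := by
  obtain ⟨ξ, hξ, hgξ⟩ := exists_hasDerivAt_eq_zero hab (continuousOn_fst hγ) heq fun s hs =>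
    (hasDerivWithinAt_fst hγ (Ioo_subset_Icc_self hs)).hasDerivAt (Icc_mem_nhds hs.1 hs.2)
  simpa only [hg _ hgξ, sub_zero] using abs_snd_sub_le hγ hh (Ioo_subset_Icc_self hξ) ht

theorem exists_integralCurve_fst_eq (hab : a ≤ b) (hglip : LipschitzWith K g)
    (hgbound : ∀ y, |g y| ≤ R) (hgpos : ∀ y, 0 ≤ y → 0 ≤ g y) (hgneg : ∀ y ≤ 0, g y ≤ 0)
    (hhlip : ∀ t ∈ Icc a b, LipschitzWith K' (h t))
    (hhcont : ∀ p, ContinuousOn (h · p) (Icc a b)) (hhbound : ∀ t ∈ Icc a b, ∀ p, |h t p| ≤ B)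
    (hk : Continuous k) :
    ∃ γ, IsIntegralCurveOn γ (planarField g h) (Icc a b) ∧
      (γ a).1 = (γ b).1 ∧ (γ b).1 = k (γ b).2 := by
  have ha := left_mem_Icc.2 hab
  have hb := right_mem_Icc.2 hab
  let c := B * (b - a)
  have hc : -c ≤ c := neg_le_self <|
    mul_nonneg ((abs_nonneg _).trans (hhbound a ha 0)) (sub_nonneg.2 hab)
  have hpath : Continuous fun d => (k d, d) := hk.prodMk continuous_id
  obtain ⟨Φ, hΦ, hΦcont⟩ := exists_flow_of_lipschitzWith_of_norm_le ⟨b, hb⟩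
    (fun t ht => lipschitzWith hglip (hhlip t ht))
    (fun p => continuousOn_const.prodMk (hhcont p))
    (fun t ht p => max_le_max (hgbound p.2) (hhbound t ht p))
    (isCompact_Icc (a := -c) (b := c) |>.image hpath).isBounded
  let γ : ℝ → ℝ → ℝ × ℝ := fun d => Φ (k d, d)
  have hγb (d) (hd : d ∈ Icc (-c) c) : γ d b = (k d, d) := (hΦ _ (mem_image_of_mem _ hd)).1
  have hγ (d) (hd : d ∈ Icc (-c) c) : IsIntegralCurveOn (γ d) (planarField g h) (Icc a b) :=
    (hΦ _ (mem_image_of_mem _ hd)).2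
  have hosc (d) (hd : d ∈ Icc (-c) c) (t) (ht : t ∈ Icc a b) : |(γ d t).2 - d| ≤ c := by
    simpa only [hγb d hd] using abs_snd_sub_le (hγ d hd) hhbound hb ht
  have hcont : ContinuousOn (fun d => (γ d b).1 - (γ d a).1) (Icc (-c) c) := by
    have hγcont (t) (ht : t ∈ Icc a b) : ContinuousOn (γ · t) (Icc (-c) c) :=
      (hΦcont t ht).comp hpath.continuousOn (mapsTo_image _ _)
    exact (hγcont b hb).fst.sub (hγcont a ha).fst
  have hleft : (γ (-c) b).1 - (γ (-c) a).1 ≤ 0 :=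
    have hd := left_mem_Icc.2 hc
    sub_nonpos.2 <| antitoneOn_fst (hγ _ hd) hgneg
      (fun t ht => by linarith [(abs_le.1 (hosc _ hd t ht)).2]) ha hb hab
  have hright : 0 ≤ (γ c b).1 - (γ c a).1 :=
    have hd := right_mem_Icc.2 hc
    sub_nonneg.2 <| monotoneOn_fst (hγ _ hd) hgpos
      (fun t ht => by linarith [(abs_le.1 (hosc _ hd t ht)).1]) ha hb hab
  obtain ⟨d, hd, hzero⟩ := intermediate_value_Icc hc hcont ⟨hleft, hright⟩
  exact ⟨γ d, hγ d hd, (sub_eq_zero.1 hzero).symm, by rw [hγb d hd]⟩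

theorem continuousOn_comp_integralCurve (hγ : IsIntegralCurveOn γ (planarField g h) (Icc a b))
    (hhlip : ∀ t ∈ Icc a b, LipschitzWith K (h t))
    (hhcont : ∀ p, ContinuousOn (h · p) (Icc a b)) :
    ContinuousOn (fun t => h t (γ t)) (Icc a b) := by
  have hjoint : ContinuousOn (Function.uncurry h) (Icc a b ×ˢ univ) :=
    continuousOn_prod_of_continuousOn_lipschitzOnWith' _ K
      (fun t ht => (hhlip t ht).lipschitzOnWith) fun p _ => hhcont p
  exact hjoint.comp (continuousOn_id.prodMk (HasDerivWithinAt.continuousOn hγ))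
    fun t ht => ⟨ht, mem_univ _⟩

theorem exists_hasDerivAt_extension (hab : a ≤ b) (hg : Continuous g)
    (hγ : IsIntegralCurveOn γ (planarField g h) (Icc a b))
    (hhγ : ContinuousOn (fun t => h t (γ t)) (Icc a b)) :
    ∃ x y : ℝ → ℝ, (∀ t, HasDerivAt x (g (y t)) t) ∧ Continuous y ∧
      (∀ t ∈ Icc a b, HasDerivAt y (h t (x t, y t)) t) ∧ ∀ t ∈ Icc a b, (x t, y t) = γ t := by
  let w : ℝ → ℝ := IccExtend hab ((Icc a b).domRestrict fun t => h t (γ t))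
  have hw (t) (ht : t ∈ Icc a b) : w t = h t (γ t) := IccExtend_of_mem hab _ ht
  obtain ⟨y, hy, hyγ⟩ := exists_hasDerivAt_eqOn_Icc hhγ.domRestrict.Icc_extend' fun t ht =>
    (hasDerivWithinAt_snd hγ ht).congr_deriv (hw t ht).symm
  have hycont : Continuous y := continuous_iff_continuousAt.2 fun t => (hy t).continuousAt
  obtain ⟨x, hx, hxγ⟩ := exists_hasDerivAt_eqOn_Icc (hg.comp hycont) fun t ht =>
    (hasDerivWithinAt_fst hγ ht).congr_deriv (congrArg g (hyγ ht).symm)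
  have hxyγ (t) (ht : t ∈ Icc a b) : (x t, y t) = γ t := Prod.ext (hxγ ht) (hyγ ht)
  refine ⟨x, y, hx, hycont, fun t ht => ?_, hxyγ⟩
  rw [hxyγ t ht, ← hw t ht]
  exact hy t

end planarField

theorem univUnitBall_apply_real (y : ℝ) :
    OpenPartialHomeomorph.univUnitBall y = y / √(1 + y ^ 2) := by
  rw [OpenPartialHomeomorph.univUnitBall_apply, Real.norm_eq_abs, sq_abs, smul_eq_mul,
    div_eq_inv_mul]

theorem Icc_subset_unitBall {M : ℝ} (hM : M < 1) : Icc (-M) M ⊆ Metric.ball 0 1 := fun v hv => by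
  rw [mem_ball_zero_iff, Real.norm_eq_abs]
  exact (abs_le.2 hv).trans_lt hM

theorem contDiffOn_univUnitBall_symm_Icc {M : ℝ} (hM : M < 1) :
    ContDiffOn ℝ 1 (OpenPartialHomeomorph.univUnitBall (E := ℝ)).symm (Icc (-M) M) :=
  OpenPartialHomeomorph.contDiffOn_univUnitBall_symm.mono (Icc_subset_unitBall hM)

/-- The inverse `v / √(1 - v²)` of `y ↦ y / √(1 + y²)`, precomposed with the retraction of the line
onto `[-M, M]`. For `0 ≤ M < 1` this makes it bounded and Lipschitz on the whole line. -/
noncomputable def truncatedInverse (M v : ℝ) : ℝ :=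
  OpenPartialHomeomorph.univUnitBall.symm (max (-M) (min M v))

namespace truncatedInverse

variable {M : ℝ}

theorem retract_mem_Icc (hM : 0 ≤ M) (v : ℝ) : max (-M) (min M v) ∈ Icc (-M) M :=
  ⟨le_max_left _ _, max_le (neg_le_self hM) (min_le_left _ _)⟩

theorem exists_lipschitzWith (hM₀ : 0 ≤ M) (hM : M < 1) :
    ∃ K, LipschitzWith K (truncatedInverse M) := by
  obtain ⟨K, hK⟩ := (contDiffOn_univUnitBall_symm_Icc hM).exists_lipschitzOnWith one_ne_zero
    (convex_Icc _ _) isCompact_Icc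
  have hretract : LipschitzWith 1 fun v : ℝ => max (-M) (min M v) :=
    (LipschitzWith.id.const_min _).const_max _
  exact ⟨K * 1, lipschitzOnWith_univ.1 <|
    hK.comp hretract.lipschitzOnWith fun v _ => retract_mem_Icc hM₀ v⟩

theorem exists_abs_le (hM₀ : 0 ≤ M) (hM : M < 1) : ∃ R, ∀ v, |truncatedInverse M v| ≤ R := by
  obtain ⟨R, hR⟩ := isCompact_Icc.exists_bound_of_continuousOn
    (contDiffOn_univUnitBall_symm_Icc hM).continuousOn
  exact ⟨R, fun v => hR _ (retract_mem_Icc hM₀ v)⟩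

theorem div_sqrt_one_add_sq (hM : M < 1) {v : ℝ} (hv : v ∈ Icc (-M) M) :
    truncatedInverse M v / √(1 + truncatedInverse M v ^ 2) = v := by
  have hinv := OpenPartialHomeomorph.univUnitBall.right_inv (Icc_subset_unitBall hM hv)
  rw [univUnitBall_apply_real] at hinv
  rwa [truncatedInverse, min_eq_right hv.2, max_eq_right hv.1]

theorem nonneg (hM : 0 ≤ M) {v : ℝ} (hv : 0 ≤ v) : 0 ≤ truncatedInverse M v :=
  mul_nonneg (inv_nonneg.2 (Real.sqrt_nonneg _)) (le_max_of_le_right (le_min hM hv))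

theorem nonpos (hM : 0 ≤ M) {v : ℝ} (hv : v ≤ 0) : truncatedInverse M v ≤ 0 :=
  mul_nonpos_of_nonneg_of_nonpos (inv_nonneg.2 (Real.sqrt_nonneg _))
    (max_le (neg_nonpos.2 hM) (min_le_of_right_le hv))

theorem eq_zero_of_apply_eq_zero (hM₀ : 0 < M) (hM : M < 1) {v : ℝ}
    (hv : truncatedInverse M v = 0) : v = 0 := by
  have hretract : max (-M) (min M v) = 0 := by
    rw [← OpenPartialHomeomorph.univUnitBall.right_inv
      (Icc_subset_unitBall hM (retract_mem_Icc hM₀.le v))]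
    exact (congrArg _ hv).trans OpenPartialHomeomorph.univUnitBall_apply_zero
  grind

theorem hasDerivAt_deriv_div_sqrt {u v : ℝ → ℝ} {t w : ℝ} (hM : M < 1)
    (hu : ∀ s, HasDerivAt u (truncatedInverse M (v s)) s) (hv : HasDerivAt v w t)
    (hvM : |v t| < M) : HasDerivAt (fun s => deriv u s / √(1 + deriv u s ^ 2)) w t := by
  refine hv.congr_of_eventuallyEq ?_
  filter_upwards [hv.continuousAt.abs.eventually_lt_const hvM] with s hs
  rw [(hu s).deriv]
  exact div_sqrt_one_add_sq hM (abs_le.1 hs.le)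

end truncatedInverse

theorem stmt_15_general {f : ℝ → ℝ × ℝ → ℝ} {T B : ℝ} {K : ℝ≥0} (hT : 0 < T)
    (hlip : ∀ t ∈ Icc 0 T, LipschitzWith K (f t)) (hcont : ∀ p, ContinuousOn (f · p) (Icc 0 T))
    (hbound : ∀ t ∈ Icc 0 T, ∀ p, |f t p| ≤ B) (hBT : B * T < 1) :
    ∃ u : ℝ → ℝ, ContDiff ℝ 1 u ∧
      (∀ t ∈ Icc 0 T, HasDerivAt (fun s => deriv u s / √(1 + deriv u s ^ 2))
        (f t (u t, deriv u t)) t) ∧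
      u 0 = u T ∧ u T = deriv u T := by
  obtain ⟨M, hM', hM⟩ := exists_between (max_lt hBT zero_lt_one)
  obtain ⟨hBM, hM₀⟩ := max_lt_iff.1 hM'
  let g := truncatedInverse M
  let h : ℝ → ℝ × ℝ → ℝ := fun t p => f t (p.1, g p.2)
  obtain ⟨K', hg⟩ := truncatedInverse.exists_lipschitzWith hM₀.le hM
  obtain ⟨R, hR⟩ := truncatedInverse.exists_abs_le hM₀.le hM
  have hhlip (t) (ht : t ∈ Icc 0 T) := (hlip t ht).comp
    (LipschitzWith.prod_fst.prodMk (hg.comp LipschitzWith.prod_snd))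
  have hhbound (t) (ht : t ∈ Icc 0 T) (p) : |h t p| ≤ B := hbound t ht _
  obtain ⟨γ, hγ, hγ₀, hγT⟩ := planarField.exists_integralCurve_fst_eq hT.le hg hR
    (fun _ => truncatedInverse.nonneg hM₀.le) (fun _ => truncatedInverse.nonpos hM₀.le)
    hhlip (fun _ => hcont _) hhbound hg.continuous
  have hγM (t) (ht : t ∈ Icc 0 T) : |(γ t).2| < M := by
    refine (planarField.abs_snd_le_of_fst_eq hγ
      (fun _ => truncatedInverse.eq_zero_of_apply_eq_zero hM₀ hM) hhbound hT hγ₀ ht).trans_lt ?_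
    rwa [sub_zero]
  obtain ⟨u, v, hu, hvcont, hv, huv⟩ := planarField.exists_hasDerivAt_extension hT.le
    hg.continuous hγ (planarField.continuousOn_comp_integralCurve hγ hhlip fun _ => hcont _)
  have hφ (t) (ht : t ∈ Icc 0 T) : HasDerivAt (fun s => deriv u s / √(1 + deriv u s ^ 2))
      (f t (u t, deriv u t)) t := by
    rw [(hu t).deriv]
    exact truncatedInverse.hasDerivAt_deriv_div_sqrt hM hu (hv t ht)
      (by simpa only [← huv t ht] using hγM t ht)
  rw [← huv T (right_mem_Icc.2 hT.le)] at hγ₀ hγT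
  rw [← huv 0 (left_mem_Icc.2 hT.le)] at hγ₀
  exact ⟨u, contDiff_one_of_hasDerivAt hu (hg.continuous.comp hvcont), hφ, hγ₀,
    hγT.trans (hu T).deriv.symm⟩

theorem stmt_15 (T β : ℝ) (hT : 0 < T) (hβ : 0 < β) (hβT : β < 1 / (2 * T)) :
    ∃ u : ℝ → ℝ, ContDiff ℝ 1 u ∧
      (∀ t ∈ Set.Icc (0:ℝ) T,
        HasDerivAt (fun s => deriv u s / Real.sqrt (1 + (deriv u s) ^ 2))
          (β * Real.cos (u t)) t) ∧
      u 0 = u T ∧ u T = deriv u T := by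
  have hβT' : β * T < 1 := by
    rw [lt_div_iff₀ (by positivity)] at hβT
    linarith
  exact stmt_15_general (f := fun _ p => β * Real.cos p.1) hT
    (fun _ _ => (lipschitzWith_smul β).comp (Real.lipschitzWith_cos.comp LipschitzWith.prod_fst))
    (fun _ => continuousOn_const) (fun _ _ p => by
      rw [abs_mul, abs_of_pos hβ]
      exact mul_le_of_le_one_right hβ.le (Real.abs_cos_le_one _)) hβT'
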